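/- Theorem 2(D): under the inertial Krasnoselskii–Mann iteration with cocoercivity-type condition and step-size condition, the sequences (y^k) and (z^k) have the same limit points: for every p ∈ H, p is a cluster point of the sequence (y^k) along k → ∞ if and only if p is a cluster point of the sequence (z^k) along k → ∞. -/

import Mathlib

/-!
Write `Δ k = z (k+1) - z k`. Two sequences whose difference tends to `0` have the same cluster
points, and `y (k+1) - z (k+1) = α • Δ k`, so it suffices that `Δ k → 0`.

Put `x k = ‖z k - zstar‖²`, `d k = ‖Δ k‖²` and `ν = lam⁻¹ - 1`. Expanding squares, cocoercivity and
the relation `ρ • T (y (k+1)) = α • Δ k - Δ (k+1)` show that the energy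
`E k = x (k+1) - α * x k + ν * (1 - α) * d k` satisfies `E (k+1) + ε * d k ≤ E k` with
`ε = ν * (1 - α)² - α * (1 + α)`, and the step-size condition says exactly that `ε > 0`
(`energy_step`). Since `z 0 = z 1`, `E 0 = (1 - α) * x 0`; monotonicity of `E` then gives
`x k ≤ x 0` for all `k`, so `E` is bounded below. Hence `E` converges, and its decrements, which
dominate `ε * d k`, tend to `0` (`tendsto_zero_of_energy`).
-/

open RealInnerProductSpace Filter

/-- Adding a null sequence preserves cluster points. -/
lemma MapClusterPt.of_sub_tendsto_zero {H ι : Type*} [NormedAddCommGroup H] {l : Filter ι}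
    {u v : ι → H} (h : Tendsto (fun k => u k - v k) l (nhds 0)) {p : H}
    (hp : MapClusterPt p l u) : MapClusterPt p l v := by
  rw [mapClusterPt_iff_ultrafilter] at hp ⊢
  obtain ⟨U, hU, hup⟩ := hp
  refine ⟨U, hU, ?_⟩
  simpa using hup.sub (h.mono_left hU)

/-- One-step energy decrease. Here `a = z (k+1) - zstar`, `b = z (k+1) - z k`, `t = T (y (k+1))`,
so that `a - b`, `a + α • b` and `a + α • b - (2 * lam * β) • t` are `z k`, `y (k+1)` and `z (k+2)`
relative to `zstar`. -/
lemma energy_step {H : Type*} [NormedAddCommGroup H] [InnerProductSpace ℝ H]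
    {α β lam : ℝ} (hα0 : 0 < α) (hβ : 0 < β) (hlam : 0 < lam) (hlam1 : lam < 1)
    (a b t : H) (hco : β * ‖t‖ ^ 2 ≤ ⟪t, a + α • b⟫) :
    ‖a + α • b - (2 * lam * β) • t‖ ^ 2 - α * ‖a‖ ^ 2
        + (lam⁻¹ - 1) * (1 - α) * ‖α • b - (2 * lam * β) • t‖ ^ 2
        + ((lam⁻¹ - 1) * (1 - α) ^ 2 - α * (1 + α)) * ‖b‖ ^ 2
      ≤ ‖a‖ ^ 2 - α * ‖a - b‖ ^ 2 + (lam⁻¹ - 1) * (1 - α) * ‖b‖ ^ 2 := by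
  set ν : ℝ := lam⁻¹ - 1 with hν
  have hν0 : 0 < ν := by
    have := (one_lt_inv₀ hlam).2 hlam1
    linarith
  set c : H := α • b - (2 * lam * β) • t with hc
  have hct : (2 * lam * β) • t = α • b - c := by rw [hc]; abel
  have e1 : ‖a + α • b - (2 * lam * β) • t‖ ^ 2
      ≤ ‖a + α • b‖ ^ 2 - ν * ‖α • b - c‖ ^ 2 := by
    rw [← hct, norm_sub_sq_real, norm_smul, real_inner_smul_right, mul_pow, Real.norm_eq_abs,
      sq_abs, real_inner_comm]
    have h := mul_le_mul_of_nonneg_left hco (by positivity : (0 : ℝ) ≤ 4 * lam * β)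
    have e : ν * ((2 * lam * β) ^ 2 * ‖t‖ ^ 2)
        = 4 * lam * β * (β * ‖t‖ ^ 2) - (2 * lam * β) ^ 2 * ‖t‖ ^ 2 := by
      rw [hν]; field_simp; ring
    rw [e]
    linarith
  have e2 : ‖a + α • b‖ ^ 2
      = (1 + α) * ‖a‖ ^ 2 - α * ‖a - b‖ ^ 2 + α * (1 + α) * ‖b‖ ^ 2 := by
    rw [norm_add_sq_real, norm_sub_sq_real, norm_smul, real_inner_smul_right, mul_pow,
      Real.norm_eq_abs, sq_abs]
    ring
  have e3 : (1 - α) * ‖c‖ ^ 2 - α * (1 - α) * ‖b‖ ^ 2 ≤ ‖α • b - c‖ ^ 2 := by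
    have h := norm_sub_sq_real b c
    rw [norm_sub_sq_real (α • b) c, norm_smul, real_inner_smul_left, mul_pow, Real.norm_eq_abs, sq_abs]
    nlinarith [mul_nonneg hα0.le (sq_nonneg ‖b - c‖)]
  have e4 := mul_le_mul_of_nonneg_left e3 hν0.le
  linarith

lemma tendsto_zero_of_energy {α γ ε : ℝ} (hα0 : 0 ≤ α) (hγ : 0 ≤ γ) (hε : 0 < ε)
    {x d : ℕ → ℝ} (hx : ∀ k, 0 ≤ x k) (hd : ∀ k, 0 ≤ d k)
    (hx01 : x 1 = x 0) (hd0 : d 0 = 0)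
    (h : ∀ k, x (k + 2) - α * x (k + 1) + γ * d (k + 1) + ε * d k
      ≤ x (k + 1) - α * x k + γ * d k) :
    Tendsto d atTop (nhds 0) := by
  set E : ℕ → ℝ := fun k => x (k + 1) - α * x k + γ * d k with hE
  have hstep : ∀ k, ε * d k ≤ E k - E (k + 1) := fun k => by
    have := h k
    simp only [hE]
    linarith
  have hanti : Antitone E := antitone_nat_of_succ_le fun k => by
    have := hstep k
    have := mul_nonneg hε.le (hd k)
    linarith
  have hE0 : ∀ k, E k ≤ (1 - α) * x 0 := fun k => by
    refine (hanti (Nat.zero_le k)).trans (le_of_eq ?_)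
    simp only [hE, zero_add, hx01, hd0]
    ring
  have hxle : ∀ k, x k ≤ x 0 := by
    intro k
    induction k with
    | zero => exact le_rfl
    | succ k ih =>
      have h1 : x (k + 1) - α * x k + γ * d k ≤ (1 - α) * x 0 := hE0 k
      have h2 := mul_nonneg hγ (hd k)
      have h3 := mul_le_mul_of_nonneg_left ih hα0
      linarith
  have hbdd : BddBelow (Set.range E) := by
    refine ⟨-(α * x 0), ?_⟩
    rintro _ ⟨k, rfl⟩
    have h1 := hx (k + 1)
    have h2 := mul_nonneg hγ (hd k)
    have h3 := mul_le_mul_of_nonneg_left (hxle k) hα0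
    simp only [hE]
    linarith
  have hlim := tendsto_atTop_ciInf hanti hbdd
  have hdiff : Tendsto (fun k => (E k - E (k + 1)) / ε) atTop (nhds 0) := by
    simpa using (hlim.sub (hlim.comp (tendsto_add_atTop_nat 1))).div_const ε
  refine squeeze_zero hd (fun k => ?_) hdiff
  rw [le_div_iff₀ hε]
  linarith [hstep k]

/-- Theorem 2(D): the sequences `(y^k)` and `(z^k)` have the same limit
(cluster) points. -/
theorem inertial_KM_same_cluster_points
    {H : Type*} [NormedAddCommGroup H] [InnerProductSpace ℝ H]
    (α β lam ρ : ℝ) (hα0 : 0 < α) (hα1 : α < 1) (hβ : 0 < β) (hlam : 0 < lam)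
    (hρ : ρ = 2 * lam * β)
    (T : H → H) (zstar : H) (hzstar : T zstar = 0)
    (z y : ℕ → H)
    (hy : ∀ k : ℕ, y (k + 1) = z (k + 1) + α • (z (k + 1) - z k))
    (hz : ∀ k : ℕ, z (k + 2) = y (k + 1) - ρ • T (y (k + 1)))
    (hcoco : ∀ k : ℕ, β * ‖T (y (k + 1))‖ ^ 2 ≤ ⟪T (y (k + 1)), y (k + 1) - zstar⟫)
    (hz01 : z 0 = z 1)
    (hstep : lam * (1 - α + 2 * α ^ 2) < (1 - α) ^ 2) :
    ∀ p : H, MapClusterPt p atTop y ↔ MapClusterPt p atTop z := by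
  subst hρ
  -- `(1 - α)² < 1 - α + 2α²`, so the step-size condition forces `lam < 1`.
  have hlam1 : lam < 1 := by
    by_contra! hcon
    nlinarith [mul_le_mul_of_nonneg_right hcon (by nlinarith : (0 : ℝ) ≤ 1 - α + 2 * α ^ 2)]
  have hν0 : 0 < lam⁻¹ - 1 := sub_pos.2 ((one_lt_inv₀ hlam).2 hlam1)
  have hε : 0 < (lam⁻¹ - 1) * (1 - α) ^ 2 - α * (1 + α) := by
    have e : (lam⁻¹ - 1) * (1 - α) ^ 2 - α * (1 + α)
        = lam⁻¹ * ((1 - α) ^ 2 - lam * (1 - α + 2 * α ^ 2)) := by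
      field_simp; ring
    rw [e]
    exact mul_pos (inv_pos.2 hlam) (sub_pos.2 hstep)
  have hd : Tendsto (fun k => ‖z (k + 1) - z k‖ ^ 2) atTop (nhds 0) := by
    refine tendsto_zero_of_energy (x := fun k => ‖z k - zstar‖ ^ 2) hα0.le
      (mul_nonneg hν0.le (sub_nonneg.2 hα1.le)) hε (fun k => sq_nonneg _) (fun k => sq_nonneg _)
      (by simp [hz01]) (by simp [hz01]) fun k => ?_
    have hya : y (k + 1) - zstar = (z (k + 1) - zstar) + α • (z (k + 1) - z k) := by
      rw [hy]; abel
    have h := energy_step hα0 hβ hlam hlam1 (z (k + 1) - zstar) (z (k + 1) - z k) (T (y (k + 1)))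
      (hya ▸ hcoco k)
    have h1 : z (k + 2) - zstar = (z (k + 1) - zstar) + α • (z (k + 1) - z k)
        - (2 * lam * β) • T (y (k + 1)) := by
      rw [hz, ← hya]; abel
    have h2 : z (k + 1 + 1) - z (k + 1) = α • (z (k + 1) - z k)
        - (2 * lam * β) • T (y (k + 1)) := by
      rw [hz k, eq_sub_of_add_eq' (hy k).symm]; abel
    have h3 : z k - zstar = (z (k + 1) - zstar) - (z (k + 1) - z k) := by abel
    simp only [h1, h2]
    rw [h3]
    exact h
  have hΔ : Tendsto (fun k => z (k + 1) - z k) atTop (nhds 0) := by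
    rw [tendsto_zero_iff_norm_tendsto_zero]
    simpa using hd.sqrt
  have hyz : Tendsto (fun k => y k - z k) atTop (nhds 0) := by
    -- `y 0` is unconstrained, so only the shifted sequence is described by `hy`.
    rw [← tendsto_add_atTop_iff_nat 1]
    simpa [hy] using hΔ.const_smul α
  have hzy : Tendsto (fun k => z k - y k) atTop (nhds 0) := by
    simpa using hyz.neg
  exact fun p => ⟨.of_sub_tendsto_zero hyz, .of_sub_tendsto_zero hzy⟩
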